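/- Let f = ∑_{i≥r} f_i ∈ ℂ[x₁,…,xₙ] with f_i zero or homogeneous of degree i, f_r ≠ 0, r ≥ 2, and suppose g² divides f_r for some nonconstant polynomial g. Then (r+1)·c_0(f) ≤ n + 1/2. -/

import Mathlib

/-!
If `‖f‖ ^ (-2s)` is integrable near `0`, compare its integral with a lower bound over suitable
small sets. Writing `x = t • y` with `0 < t ≤ 1` and `y` in a fixed ball,
`f (t • y) = t ^ r f_r(y) + t ^ (r+1) f_{r+1}(y) + ⋯`. Since `g ^ 2 ∣ f_r`, on the tube
`E_t = {y | ‖y‖ ≤ R, ‖g y‖ ^ 2 ≤ t}` the first term is also `O(t ^ (r+1))`, hence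
`‖f‖ ≤ C t ^ (r+1)` on `t • E_t` (`norm_eval_smul_le`). The tube surrounds a complex hypersurface,
which has real codimension two, and has radius of order at least `√t`, so its volume is at least
`c t` (`exists_volume_tube_ge`). Therefore
`∫ ‖f‖ ^ (-2s) ≥ const * t ^ (-2s(r+1)) * t ^ (2n) * t`, and letting `t → 0` forces
`2n + 1 - 2s(r+1) ≥ 0`.

The zero set of `f`, where `0 ^ (-2s)` takes the value `0`, is discarded by
`volume_zeros_eq_zero`. Both volume statements come from Tonelli's theorem along a family of lines:
dilations for the null set, translations along a fixed direction for the tube.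
-/

open MeasureTheory MvPolynomial

/-- The log-canonical threshold of a polynomial `f ∈ ℂ[x₁,…,xₙ]` at a point `y`
(with `f(y) = 0`), defined analytically as the supremum of the positive reals `s`
such that `‖f‖^{-2s}` is integrable on some neighbourhood of `y`. -/
noncomputable def lctAt {n : ℕ} (f : MvPolynomial (Fin n) ℂ) (y : Fin n → ℂ) : ℝ :=
  sSup {s : ℝ | 0 < s ∧ ∃ U ∈ nhds y,
    MeasureTheory.IntegrableOn
      (fun x : Fin n → ℂ => ‖MvPolynomial.eval x f‖ ^ (-2 * s)) U}

/-- The (global) log-canonical threshold of `f`, the infimum of the local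
log-canonical thresholds over the zeros of `f`. -/
noncomputable def lct {n : ℕ} (f : MvPolynomial (Fin n) ℂ) : ℝ :=
  sInf {c : ℝ | ∃ y, MvPolynomial.eval y f = 0 ∧ c = lctAt f y}

/-- Restriction of `g` to the complex line `z ↦ a + z • v`, as a polynomial in `z`. -/
noncomputable def linePoly {n : ℕ} (g : MvPolynomial (Fin n) ℂ) (a v : Fin n → ℂ) :
    Polynomial ℂ :=
  MvPolynomial.aeval (fun i => Polynomial.C (a i) + Polynomial.X * Polynomial.C (v i)) g

lemma eval_linePoly {n : ℕ} (g : MvPolynomial (Fin n) ℂ) (a v : Fin n → ℂ) (z : ℂ) :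
    (linePoly g a v).eval z = MvPolynomial.eval (a + z • v) g := by
  unfold linePoly
  rw [← Polynomial.coe_evalRingHom, ← MvPolynomial.eval₂_id, MvPolynomial.aeval_def,
    MvPolynomial.hom_eval₂]
  congr 1
  · ext x; simp
  · funext i
    simp only [Polynomial.coe_evalRingHom, Polynomial.eval_add, Polynomial.eval_C,
      Polynomial.eval_mul, Polynomial.eval_X, Pi.add_apply, Pi.smul_apply, smul_eq_mul]

/-- Around a point `y₀` with `F y₀ ≠ 0`, every real line through `y₀` meets the zero set finitely
often, so by Tonelli almost every dilate of the zero set about `y₀` is null. -/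
lemma volume_zeros_eq_zero {n : ℕ} {F : MvPolynomial (Fin n) ℂ} (hF : F ≠ 0) :
    volume {x : Fin n → ℂ | MvPolynomial.eval x F = 0} = 0 := by
  obtain ⟨y₀, hy₀⟩ : ∃ y, MvPolynomial.eval y F ≠ 0 := by
    by_contra! h
    exact hF (MvPolynomial.funext fun x => by simpa using h x)
  have hc : Continuous fun x : Fin n → ℂ => MvPolynomial.eval x F := MvPolynomial.continuous_eval F
  set N : Set (Fin n → ℂ) := {y | MvPolynomial.eval (y₀ + y) F = 0} with hN
  have hNmeas : MeasurableSet {q : ℝ × (Fin n → ℂ) | q.1 • q.2 ∈ N} := by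
    have : IsClosed {q : ℝ × (Fin n → ℂ) | MvPolynomial.eval (y₀ + q.1 • q.2) F = 0} :=
      isClosed_eq (hc.comp (by fun_prop)) continuous_const
    exact this.measurableSet
  have h1 : ((volume : Measure ℝ).prod (volume : Measure (Fin n → ℂ)))
      {q : ℝ × (Fin n → ℂ) | q.1 • q.2 ∈ N} = 0 := by
    rw [Measure.prod_apply_symm hNmeas]
    refine (lintegral_congr fun y => ?_).trans lintegral_zero
    have hp : linePoly F y₀ y ≠ 0 := by
      intro h
      apply hy₀
      simpa [h] using (eval_linePoly F y₀ y 0).symm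
    refine Set.Finite.measure_zero (Set.Finite.subset
      (Set.Finite.preimage (f := ((↑) : ℝ → ℂ)) Complex.ofReal_injective.injOn
        (linePoly F y₀ y).roots.toFinset.finite_toSet) fun t ht => ?_) _
    have ht' : MvPolynomial.eval (y₀ + t • y) F = 0 := ht
    simp only [Set.mem_preimage, Finset.mem_coe, Multiset.mem_toFinset, Polynomial.mem_roots hp,
      Polynomial.IsRoot, eval_linePoly]
    exact ht'
  have h2 := (Measure.measure_prod_null hNmeas).1 h1
  obtain ⟨t, ht, ht0⟩ : ∃ t : ℝ, volume ((Prod.mk t) ⁻¹' {q : ℝ × (Fin n → ℂ) | q.1 • q.2 ∈ N}) = 0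
      ∧ t ≠ 0 := by
    have h3 : ∀ᵐ t : ℝ, t ≠ 0 := by
      simp [ae_iff]
    exact (h2.and h3).exists
  have h4 : volume N = 0 := by
    have : (Prod.mk t) ⁻¹' {q : ℝ × (Fin n → ℂ) | q.1 • q.2 ∈ N} = (fun y => t • y) ⁻¹' N := rfl
    rw [this, Measure.addHaar_preimage_smul _ ht0] at ht
    rcases mul_eq_zero.1 ht with h | h
    · exfalso
      rw [ENNReal.ofReal_eq_zero, ← not_lt] at h
      exact h (by positivity)
    · exact h
  have h5 : N = (fun y => y₀ + y) ⁻¹' {x : Fin n → ℂ | MvPolynomial.eval x F = 0} := rfl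
  rwa [h5, measure_preimage_add] at h4

/-- A nonconstant polynomial has a zero `y₀` and a line through `y₀` on which it does not vanish
identically: take the line through two points where its values differ. -/
lemma exists_line {n : ℕ} {g : MvPolynomial (Fin n) ℂ} (hg : 0 < g.totalDegree) :
    ∃ y₀ v : Fin n → ℂ, MvPolynomial.eval y₀ g = 0 ∧ linePoly g y₀ v ≠ 0 := by
  obtain ⟨a, b, hab⟩ : ∃ a b, MvPolynomial.eval a g ≠ MvPolynomial.eval b g := by
    by_contra! h
    have : g = MvPolynomial.C (MvPolynomial.eval 0 g) :=
      MvPolynomial.funext fun x => by simpa using h x 0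
    rw [this] at hg
    simp at hg
  have h0 := eval_linePoly g a (b - a) 0
  have h1 := eval_linePoly g a (b - a) 1
  simp only [zero_smul, add_zero, one_smul, add_sub_cancel] at h0 h1
  obtain ⟨z, hz⟩ := IsAlgClosed.exists_root (linePoly g a (b - a)) (by
    intro h
    rw [Polynomial.eq_C_of_degree_eq_zero h] at h0 h1
    simp only [Polynomial.eval_C] at h0 h1
    exact hab (h0.symm.trans h1))
  refine ⟨a + z • (b - a), b - a, by rw [← eval_linePoly]; exact hz, fun h => ?_⟩
  have e : ∀ w, MvPolynomial.eval (a + z • (b - a) + w • (b - a)) g = 0 := fun w => by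
    rw [← eval_linePoly, h, Polynomial.eval_zero]
  have e0 := e (-z)
  have e1 := e (1 - z)
  rw [add_assoc, ← add_smul] at e0 e1
  simp at e0 e1
  exact hab (e0.trans e1.symm)

/-- Persistence of roots, as in Hurwitz's theorem: the restriction of `g` to every line parallel to
`v` and close to `y₀` still has a zero in the unit disc. -/
lemma exists_root_nearby {n : ℕ} {g : MvPolynomial (Fin n) ℂ} {y₀ v : Fin n → ℂ}
    (h0 : MvPolynomial.eval y₀ g = 0) (hp : linePoly g y₀ v ≠ 0) :
    ∃ δ : ℝ, 0 < δ ∧ δ ≤ 1 ∧ ∀ y ∈ Metric.ball y₀ δ, ∃ z ∈ Metric.closedBall (0 : ℂ) 1,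
      MvPolynomial.eval (y + z • v) g = 0 := by
  have hc : Continuous fun x : Fin n → ℂ => MvPolynomial.eval x g := MvPolynomial.continuous_eval g
  obtain ⟨ρ, hρ, hρroot⟩ : ∃ ρ ∈ Set.Ioo (0 : ℝ) 1,
      ∀ z ∈ Metric.sphere (0 : ℂ) ρ, MvPolynomial.eval (y₀ + z • v) g ≠ 0 := by
    obtain ⟨ρ, hρ, hn⟩ := (Set.Ioo_infinite (zero_lt_one (α := ℝ))).exists_notMem_finset
      ((linePoly g y₀ v).roots.toFinset.image norm)
    refine ⟨ρ, hρ, fun z hz h => hn ?_⟩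
    rw [Finset.mem_image]
    refine ⟨z, ?_, by simpa using hz⟩
    rw [Multiset.mem_toFinset, Polynomial.mem_roots hp, Polynomial.IsRoot, eval_linePoly, h]
  obtain ⟨ε, hε, hεs⟩ : ∃ ε > 0, ∀ z ∈ Metric.sphere (0 : ℂ) ρ,
      2 * ε ≤ ‖MvPolynomial.eval (y₀ + z • v) g‖ := by
    obtain ⟨z, hz, hmin⟩ := (isCompact_sphere (0 : ℂ) ρ).exists_isMinOn
      (NormedSpace.sphere_nonempty.2 hρ.1.le)
      (f := fun z => ‖MvPolynomial.eval (y₀ + z • v) g‖)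
      (hc.comp (by fun_prop)).norm.continuousOn
    refine ⟨‖MvPolynomial.eval (y₀ + z • v) g‖ / 2, half_pos (norm_pos_iff.2 (hρroot z hz)),
      fun w hw => ?_⟩
    have := hmin hw
    simp only [Set.mem_ofPred_eq] at this
    linarith
  have ev1 : ∀ᶠ y in nhds y₀, ∀ z ∈ Metric.sphere (0 : ℂ) ρ,
      ε < ‖MvPolynomial.eval (y + z • v) g - MvPolynomial.eval y g‖ := by
    refine (isCompact_sphere (0 : ℂ) ρ).eventually_forall_of_forall_eventually fun z hz => ?_
    have hcont : Continuous fun q : (Fin n → ℂ) × ℂ =>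
        ‖MvPolynomial.eval (q.1 + q.2 • v) g - MvPolynomial.eval q.1 g‖ :=
      ((hc.comp (by fun_prop)).sub (hc.comp (by fun_prop))).norm
    refine hcont.continuousAt.eventually (lt_mem_nhds ?_)
    simp only [h0, sub_zero]
    linarith [hεs z hz]
  have ev2 : ∀ᶠ y in nhds y₀, ‖MvPolynomial.eval y g‖ < ε / 2 := by
    refine hc.norm.continuousAt.eventually (gt_mem_nhds ?_)
    simp only [h0, norm_zero]
    linarith
  obtain ⟨δ, hδ, hball⟩ := Metric.eventually_nhds_iff_ball.1 (ev1.and ev2)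
  refine ⟨min δ 1, lt_min hδ one_pos, min_le_right _ _, fun y hy => ?_⟩
  obtain ⟨b1, b2⟩ := hball y (Metric.ball_subset_ball (min_le_left _ _) hy)
  have hd : Differentiable ℂ fun z : ℂ => MvPolynomial.eval (y + z • v) g := by
    simp_rw [← eval_linePoly]
    exact Polynomial.differentiable _
  have key := DiffContOnCl.ball_subset_image_closedBall (f := fun z : ℂ =>
      MvPolynomial.eval (y + z • v) g) (z₀ := 0) (r := ρ) (ε := ε)
    hd.diffContOnCl hρ.1 (fun z hz => by simpa using (b1 z hz).le) (by
      intro hev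
      simp only [not_not] at hev
      -- a polynomial that is constant near `0` is constant
      have hq : linePoly g y v = Polynomial.C (MvPolynomial.eval y g) := by
        apply Polynomial.eq_of_infinite_eval_eq
        refine (infinite_of_mem_nhds (0 : ℂ) hev).mono fun w hw => ?_
        simpa [eval_linePoly] using hw
      obtain ⟨w, hw⟩ : (Metric.sphere (0 : ℂ) ρ).Nonempty := NormedSpace.sphere_nonempty.2 hρ.1.le
      have := b1 w hw
      rw [← eval_linePoly, hq] at this
      simp at this
      linarith)
  obtain ⟨z, hz, hz0⟩ := key (show (0 : ℂ) ∈ _ by simpa using b2)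
  exact ⟨z, Metric.closedBall_subset_closedBall hρ.2.le hz, hz0⟩

lemma exists_lipschitz {n : ℕ} (g : MvPolynomial (Fin n) ℂ) (R : ℝ) :
    ∃ L : NNReal, LipschitzOnWith L (fun x : Fin n → ℂ => MvPolynomial.eval x g)
      (Metric.closedBall 0 R) := by
  have h : ContDiff ℝ 1 fun x : Fin n → ℂ => MvPolynomial.eval x g := by
    induction g using MvPolynomial.induction_on with
    | C a => simpa using contDiff_const
    | add p q hp hq => simpa using hp.add hq
    | mul_X p i hp =>
      simp only [map_mul, eval_X]
      exact hp.mul (by fun_prop)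
  exact h.locallyLipschitz.locallyLipschitzOn.exists_lipschitzOnWith_of_compact
    (isCompact_closedBall _ _)

/-- The tube `‖g‖ ≤ √t` around the hypersurface `g = 0` has volume at least of order `t`. Many
parallel complex lines contain a zero of `g` in a bounded region, and since `g` is Lipschitz each of
them meets the tube in a disc of radius proportional to `√t`. -/
lemma exists_volume_tube_ge {n : ℕ} {g : MvPolynomial (Fin n) ℂ} (hg : 0 < g.totalDegree) :
    ∃ R c : ℝ, 0 < R ∧ 0 < c ∧ ∀ t ∈ Set.Ioc (0 : ℝ) 1, ENNReal.ofReal (c * t) ≤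
      volume (Metric.closedBall (0 : Fin n → ℂ) R ∩ {y | ‖MvPolynomial.eval y g‖ ^ 2 ≤ t}) := by
  obtain ⟨y₀, v, h0, hp⟩ := exists_line hg
  obtain ⟨δ, hδ, hδ1, hroot⟩ := exists_root_nearby h0 hp
  have hc : Continuous fun x : Fin n → ℂ => MvPolynomial.eval x g := MvPolynomial.continuous_eval g
  set R : ℝ := ‖y₀‖ + 1 + 2 * ‖v‖ with hR
  obtain ⟨L, hL⟩ := exists_lipschitz g R
  set L' : ℝ := L * ‖v‖ + 1 with hL'
  have hL'1 : 1 ≤ L' := by rw [hL']; linarith [show (0 : ℝ) ≤ L * ‖v‖ by positivity]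
  have hL'0 : 0 < L' := by linarith
  have hmemR : ∀ y ∈ Metric.ball y₀ δ, ∀ z ∈ Metric.closedBall (0 : ℂ) 2,
      y + z • v ∈ Metric.closedBall (0 : Fin n → ℂ) R := by
    intro y hy z hz
    rw [mem_closedBall_zero_iff] at hz ⊢
    have h1 : ‖y - y₀‖ < δ := by simpa [dist_eq_norm] using hy
    have h2 : ‖z • v‖ ≤ 2 * ‖v‖ := by
      rw [norm_smul]; gcongr
    calc ‖y + z • v‖ = ‖(y - y₀) + y₀ + z • v‖ := by rw [sub_add_cancel]
      _ ≤ ‖y - y₀‖ + ‖y₀‖ + ‖z • v‖ := norm_add₃_le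
      _ ≤ R := by rw [hR]; linarith
  set A := volume (Metric.closedBall (0 : ℂ) 2) with hA
  set B := volume (Metric.ball y₀ δ) with hB
  have hA0 : A ≠ 0 := (Metric.measure_closedBall_pos volume _ two_pos).ne'
  have hAt : A ≠ ⊤ := measure_closedBall_lt_top.ne
  have hB0 : B ≠ 0 := (Metric.measure_ball_pos volume _ hδ).ne'
  have hBt : B ≠ ⊤ := measure_ball_lt_top.ne
  refine ⟨R, (B / A).toReal * (Real.pi / L' ^ 2), by positivity, ?_, fun t ht => ?_⟩
  · have : 0 < (B / A).toReal := ENNReal.toReal_pos (ENNReal.div_ne_zero.2 ⟨hB0, hAt⟩)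
      (ENNReal.div_ne_top hBt hA0)
    have := Real.pi_pos
    positivity
  set E := Metric.closedBall (0 : Fin n → ℂ) R ∩ {y | ‖MvPolynomial.eval y g‖ ^ 2 ≤ t} with hE
  have hEc : IsClosed E :=
    Metric.isClosed_closedBall.inter (isClosed_le (hc.norm.pow 2) continuous_const)
  set S : Set (ℂ × (Fin n → ℂ)) := {q | q.1 ∈ Metric.closedBall (0 : ℂ) 2 ∧ q.2 + q.1 • v ∈ E}
    with hS
  have hSm : MeasurableSet S := by
    have : IsClosed S := (Metric.isClosed_closedBall.preimage continuous_fst).inter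
      (hEc.preimage (f := fun q : ℂ × (Fin n → ℂ) => q.2 + q.1 • v) (by fun_prop))
    exact this.measurableSet
  -- Slicing over `z` gives translates of `E`; slicing over `y` gives the parts of `E` on
  -- the lines `z ↦ y + z • v`.
  have up : ((volume : Measure ℂ).prod (volume : Measure (Fin n → ℂ))) S ≤ A * volume E := by
    rw [Measure.prod_apply hSm, mul_comm, hA, ← setLIntegral_const,
      ← lintegral_indicator Metric.isClosed_closedBall.measurableSet]
    refine lintegral_mono fun z => ?_
    by_cases hz : z ∈ Metric.closedBall (0 : ℂ) 2
    · rw [Set.indicator_of_mem hz]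
      refine (measure_mono (t := (fun y => y + z • v) ⁻¹' E) fun y hy => hy.2).trans ?_
      rw [measure_preimage_add_right]
    · rw [Set.indicator_of_notMem hz]
      refine le_of_eq ?_
      convert measure_empty (μ := (volume : Measure (Fin n → ℂ)))
      ext y
      simp only [Set.mem_preimage, Set.mem_empty_iff_false, iff_false]
      exact fun h => hz h.1
  have hsq : 0 < √t := Real.sqrt_pos.2 ht.1
  have hsq1 : √t ≤ 1 := Real.sqrt_le_one.2 ht.2
  have low : ENNReal.ofReal (Real.pi * t / L' ^ 2) * B ≤
      ((volume : Measure ℂ).prod (volume : Measure (Fin n → ℂ))) S := by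
    rw [Measure.prod_apply_symm hSm, hB, ← setLIntegral_const,
      ← lintegral_indicator Metric.isOpen_ball.measurableSet]
    refine lintegral_mono fun y => ?_
    by_cases hy : y ∈ Metric.ball y₀ δ
    swap
    · rw [Set.indicator_of_notMem hy]; exact zero_le
    rw [Set.indicator_of_mem hy]
    obtain ⟨z₀, hz₀, hz⟩ := hroot y hy
    have hvol : volume (Metric.closedBall z₀ (√t / L')) =
        ENNReal.ofReal (Real.pi * t / L' ^ 2) := by
      rw [Complex.volume_closedBall, ← ENNReal.ofReal_pow (by positivity), div_pow,
        Real.sq_sqrt ht.1.le, ← ENNReal.ofReal_coe_nnreal, ← ENNReal.ofReal_mul (div_nonneg ht.1.le (sq_nonneg _))]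
      congr 1
      rw [NNReal.coe_real_pi]
      ring
    rw [← hvol]
    refine measure_mono fun z hzz => ?_
    rw [mem_closedBall_iff_norm] at hzz
    have hq1 : √t / L' ≤ 1 := (div_le_one hL'0).2 (hsq1.trans hL'1)
    rw [mem_closedBall_zero_iff] at hz₀
    have hz₀2 : z₀ ∈ Metric.closedBall (0 : ℂ) 2 := by
      rw [mem_closedBall_zero_iff]; linarith
    have hz2 : z ∈ Metric.closedBall (0 : ℂ) 2 := by
      rw [mem_closedBall_zero_iff]
      have := norm_le_norm_add_norm_sub' z z₀
      linarith
    have hlip := hL.norm_sub_le (hmemR y hy z hz2) (hmemR y hy z₀ hz₀2)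
    simp only [hz, sub_zero, add_sub_add_left_eq_sub, ← sub_smul, norm_smul] at hlip
    refine ⟨hz2, hmemR y hy z hz2, ?_⟩
    have h3 : ‖MvPolynomial.eval (y + z • v) g‖ ≤ √t := by
      calc _ ≤ (L : ℝ) * (‖z - z₀‖ * ‖v‖) := hlip
        _ = (L * ‖v‖) * ‖z - z₀‖ := by ring
        _ ≤ L' * (√t / L') := by gcongr; rw [hL']; linarith
        _ = √t := by field_simp
    calc _ ≤ √t ^ 2 := by gcongr
      _ = t := Real.sq_sqrt ht.1.le
  have hfin := low.trans up
  have : ENNReal.ofReal ((B / A).toReal * (Real.pi / L' ^ 2) * t) =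
      ENNReal.ofReal (Real.pi * t / L' ^ 2) * B / A := by
    rw [mul_assoc, ENNReal.ofReal_mul ENNReal.toReal_nonneg,
      ENNReal.ofReal_toReal (ENNReal.div_ne_top hBt hA0), mul_div_assoc, mul_comm]
    congr 2
    ring
  rw [this]
  exact ENNReal.div_le_of_le_mul' hfin

lemma eval_real_smul {n d : ℕ} {p : MvPolynomial (Fin n) ℂ} (hp : p.IsHomogeneous d) (t : ℝ)
    (y : Fin n → ℂ) :
    MvPolynomial.eval (t • y) p = (t : ℂ) ^ d * MvPolynomial.eval y p := by
  rw [MvPolynomial.eval_eq, MvPolynomial.eval_eq, Finset.mul_sum]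
  refine Finset.sum_congr rfl fun m hm => ?_
  have hd : ∑ i ∈ m.support, m i = d := by
    rw [← hp (MvPolynomial.mem_support_iff.1 hm), Finsupp.weight_apply]
    simp [Finsupp.sum]
  simp only [Pi.smul_apply, Complex.real_smul, mul_pow, Finset.prod_mul_distrib,
    Finset.prod_pow_eq_pow_sum, hd]
  ring

/-- On the tube `‖g y‖ ^ 2 ≤ t` the term of degree `r` gains an extra factor `t`, so all the terms of
`f (t • y)` are `O(t ^ (r + 1))`. -/
lemma norm_eval_smul_le {n r : ℕ} {f g : MvPolynomial (Fin n) ℂ}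
    (hlow : ∀ i < r, MvPolynomial.homogeneousComponent i f = 0)
    (hdvd : g ^ 2 ∣ MvPolynomial.homogeneousComponent r f) (R : ℝ) :
    ∃ C : ℝ, 0 < C ∧ ∀ t ∈ Set.Ioc (0 : ℝ) 1, ∀ y ∈ Metric.closedBall (0 : Fin n → ℂ) R,
      ‖MvPolynomial.eval y g‖ ^ 2 ≤ t → ‖MvPolynomial.eval (t • y) f‖ ≤ C * t ^ (r + 1) := by
  have bdd : ∀ p : MvPolynomial (Fin n) ℂ, ∃ M : ℝ, 0 ≤ M ∧
      ∀ y ∈ Metric.closedBall (0 : Fin n → ℂ) R, ‖MvPolynomial.eval y p‖ ≤ M := by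
    intro p
    obtain ⟨M, hM⟩ := (isCompact_closedBall (0 : Fin n → ℂ) R).exists_bound_of_continuousOn
      (MvPolynomial.continuous_eval p).continuousOn
    exact ⟨max M 0, le_max_right _ _, fun y hy => (hM y hy).trans (le_max_left _ _)⟩
  have each : ∀ i, ∃ C : ℝ, 0 ≤ C ∧ ∀ t ∈ Set.Ioc (0 : ℝ) 1,
      ∀ y ∈ Metric.closedBall (0 : Fin n → ℂ) R, ‖MvPolynomial.eval y g‖ ^ 2 ≤ t →
      ‖MvPolynomial.eval (t • y) (MvPolynomial.homogeneousComponent i f)‖ ≤ C * t ^ (r + 1) := by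
    intro i
    rcases lt_trichotomy i r with hi | rfl | hi
    · exact ⟨0, le_rfl, fun t _ y _ _ => by simp [hlow i hi]⟩
    · obtain ⟨q, hq⟩ := hdvd
      obtain ⟨M, hM0, hM⟩ := bdd q
      refine ⟨M, hM0, fun t ht y hy hyt => ?_⟩
      have := ht.1
      rw [eval_real_smul (MvPolynomial.homogeneousComponent_isHomogeneous i f), hq]
      simp only [map_mul, map_pow, norm_mul, norm_pow, Complex.norm_real, Real.norm_eq_abs,
        abs_of_pos ht.1]
      calc t ^ i * (‖MvPolynomial.eval y g‖ ^ 2 * ‖MvPolynomial.eval y q‖)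
          ≤ t ^ i * (t * M) := by gcongr; exact hM y hy
        _ = M * t ^ (i + 1) := by ring
    · obtain ⟨M, hM0, hM⟩ := bdd (MvPolynomial.homogeneousComponent i f)
      refine ⟨M, hM0, fun t ht y hy _ => ?_⟩
      have := ht.1
      rw [eval_real_smul (MvPolynomial.homogeneousComponent_isHomogeneous i f)]
      simp only [norm_mul, norm_pow, Complex.norm_real, Real.norm_eq_abs, abs_of_pos ht.1]
      rw [mul_comm]
      exact mul_le_mul (hM y hy) (pow_le_pow_of_le_one ht.1.le ht.2 hi) (by positivity) hM0
  choose C hC0 hC using each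
  refine ⟨1 + ∑ i ∈ Finset.range (f.totalDegree + 1), C i,
    add_pos_of_pos_of_nonneg one_pos (Finset.sum_nonneg fun i _ => hC0 i), fun t ht y hy hyt => ?_⟩
  have := ht.1
  conv_lhs => rw [← MvPolynomial.sum_homogeneousComponent f, map_sum]
  calc _ ≤ ∑ i ∈ Finset.range (f.totalDegree + 1), C i * t ^ (r + 1) :=
        norm_sum_le_of_le _ fun i _ => hC i t ht y hy hyt
    _ = (∑ i ∈ Finset.range (f.totalDegree + 1), C i) * t ^ (r + 1) := by rw [Finset.sum_mul]
    _ ≤ _ := by gcongr; linarith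

/-- Write `f = ∑_{i≥r} f_i` with `f_r ≠ 0`, `r ≥ 2`, and suppose `g² ∣ f_r`
for some nonconstant polynomial `g`. Then `(r+1)·c₀(f) ≤ n + 1/2`. -/
theorem stmt9 {n : ℕ} (f g : MvPolynomial (Fin n) ℂ) (r : ℕ)
    (hf : 0 < f.totalDegree) (hr : 2 ≤ r)
    (hlow : ∀ i < r, MvPolynomial.homogeneousComponent i f = 0)
    (hfr : MvPolynomial.homogeneousComponent r f ≠ 0)
    (hg : 0 < g.totalDegree)
    (hdvd : g ^ 2 ∣ MvPolynomial.homogeneousComponent r f) :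
    ((r : ℝ) + 1) * lctAt f 0 ≤ (n : ℝ) + 1 / 2 := by
  have hr0 : (0 : ℝ) < (r : ℝ) + 1 := by positivity
  rw [← le_div_iff₀' hr0]
  refine Real.sSup_le ?_ (by positivity)
  rintro s ⟨hs, U, hU, hint⟩
  rw [le_div_iff₀' hr0]
  by_contra! hcon
  have hf0 : f ≠ 0 := by rintro rfl; simp at hf
  obtain ⟨R, c, hR, hc, hvol⟩ := exists_volume_tube_ge hg
  obtain ⟨C, hC, hbd⟩ := norm_eval_smul_le hlow hdvd R
  obtain ⟨η, hη, hηU⟩ := Metric.mem_nhds_iff.1 hU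
  set I := ∫⁻ x in U, ENNReal.ofReal (‖MvPolynomial.eval x f‖ ^ (-2 * s)) with hI
  have hIfin : I ≠ ⊤ := (hint.lintegral_lt_top).ne
  have hae : ∀ᵐ x : Fin n → ℂ, MvPolynomial.eval x f ≠ 0 := by
    rw [ae_iff]; simpa using volume_zeros_eq_zero hf0
  set α : ℝ := 2 * n + 1 - 2 * s * (r + 1) with hα
  have hα0 : α < 0 := by rw [hα]; linarith
  have main : ∀ t ∈ Set.Ioc (0 : ℝ) 1, t * R < η → C ^ (-2 * s) * c * t ^ α ≤ I.toReal := by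
    intro t ht htR
    have ht0 := ht.1
    set E := Metric.closedBall (0 : Fin n → ℂ) R ∩ {y | ‖MvPolynomial.eval y g‖ ^ 2 ≤ t} with hE
    have hEc : IsCompact E := (isCompact_closedBall _ _).inter_right
      (isClosed_le ((MvPolynomial.continuous_eval g).norm.pow 2) continuous_const)
    have hWm : MeasurableSet ((fun y => t • y) '' E) :=
      (hEc.image (continuous_const_smul t)).isClosed.measurableSet
    have hWU : (fun y => t • y) '' E ⊆ U := by
      rintro _ ⟨y, hy, rfl⟩
      apply hηU
      have := mem_closedBall_zero_iff.1 hy.1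
      rw [mem_ball_zero_iff, norm_smul, Real.norm_eq_abs, abs_of_pos ht.1]
      exact lt_of_le_of_lt (by gcongr) htR
    have hW : ENNReal.ofReal (t ^ (2 * n) * (c * t)) ≤ volume ((fun y => t • y) '' E) := by
      have : volume ((fun y => t • y) '' E) = ENNReal.ofReal (t ^ (2 * n)) * volume E := by
        have h := Measure.addHaar_smul (volume : Measure (Fin n → ℂ)) t E
        have hd : Module.finrank ℝ (Fin n → ℂ) = 2 * n := by
          simp [Module.finrank_pi_fintype, mul_comm]
        rwa [hd, abs_of_pos (by positivity)] at h
      rw [this, ENNReal.ofReal_mul (by positivity)]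
      gcongr
      exact hvol t ht
    have hlb : ENNReal.ofReal ((C * t ^ (r + 1)) ^ (-2 * s)) * volume ((fun y => t • y) '' E)
        ≤ I := by
      rw [← setLIntegral_const]
      refine le_trans (setLIntegral_mono_ae' hWm ?_) (lintegral_mono_set hWU)
      filter_upwards [hae] with x hx hxW
      obtain ⟨y, hy, rfl⟩ := hxW
      refine ENNReal.ofReal_le_ofReal (Real.rpow_le_rpow_of_nonpos (norm_pos_iff.2 hx)
        (hbd t ht y hy.1 hy.2) (by linarith))
    have hfin : ENNReal.ofReal ((C * t ^ (r + 1)) ^ (-2 * s) * (t ^ (2 * n) * (c * t))) ≤ I := by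
      rw [ENNReal.ofReal_mul (by positivity)]
      exact le_trans (by gcongr) hlb
    have hreal := (ENNReal.ofReal_le_iff_le_toReal hIfin).1 hfin
    refine le_trans (le_of_eq ?_) hreal
    rw [Real.mul_rpow hC.le (by positivity), ← Real.rpow_natCast t (r + 1), ← Real.rpow_mul ht0.le,
      ← Real.rpow_natCast t (2 * n)]
    have e : t ^ α = t ^ (((r + 1 : ℕ) : ℝ) * (-2 * s)) * (t ^ ((2 * n : ℕ) : ℝ) * t) := by
      nth_rw 4 [← Real.rpow_one t]
      rw [← Real.rpow_add ht0, ← Real.rpow_add ht0, hα]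
      congr 1
      push_cast
      ring
    rw [e]
    ring
  have hlim : Filter.Tendsto (fun t : ℝ => C ^ (-2 * s) * c * t ^ α) (nhdsWithin 0 (Set.Ioi 0))
      Filter.atTop :=
    (tendsto_rpow_neg_nhdsGT_zero hα0).const_mul_atTop (by positivity)
  have ev1 := hlim.eventually_gt_atTop I.toReal
  have ev2 : ∀ᶠ t : ℝ in nhdsWithin 0 (Set.Ioi 0), t ∈ Set.Ioc (0 : ℝ) 1 :=
    Ioc_mem_nhdsGT one_pos
  have ev3 : ∀ᶠ t : ℝ in nhdsWithin 0 (Set.Ioi 0), t * R < η := by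
    refine nhdsWithin_le_nhds ?_
    have : Continuous fun t : ℝ => t * R := by fun_prop
    exact this.continuousAt.eventually (gt_mem_nhds (by simpa using hη))
  obtain ⟨t, h1, h2, h3⟩ := (ev1.and (ev2.and ev3)).exists
  exact absurd (main t h2 h3) (not_le.2 h1)
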